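/- arXiv:2412.01915 — 3 statements merged into one kernel-verified Lean document; each statement's English description precedes it below -/
import Mathlib

section
/- Two-variable Grönwall lemma: let f, g : D → ℝ be nonnegative continuous functions such that the partial derivatives ∂f/∂u and ∂g/∂ū exist and are continuous on D and satisfy the differential inequality ∂f/∂u(u,ū) + ∂g/∂ū(u,ū) ≤ C·(f(u,ū) + g(u,ū)) for all (u,ū) ∈ D, where C ≥ 0. Set A := 1 + C·e^{C u_*}·u_* and C' := A·exp(C·A·ū_*) + e^{C u_*}·(1 + C·A·ū_*·exp(C·A·ū_*)). Then for all (u,ū) ∈ D: ∫₀^ū f(u,ū') dū' + ∫₀^u g(u',ū) du' ≤ C'·( ∫₀^ū f(0,ū') dū' + ∫₀^u g(u',0) du' ). -/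
open Set MeasureTheory intervalIntegral

/-- The domain `D = [0,u_*] × [0,ū_*] ⊆ ℝ²`. -/
def Dset (us ubs : ℝ) : Set (ℝ × ℝ) := Set.Icc 0 us ×ˢ Set.Icc 0 ubs

/-!
The factor `exp (-C (u + ū))` absorbs the right-hand side of the differential inequality: the
vector field `exp (-C (u + ū)) (f, g)` has nonpositive divergence. Integrating the divergence over
`[0, u] × [0, ū]` shows that the weighted flux through the two outgoing edges is at most the
weighted flux through the two incoming ones. As the weight lies between `exp (-C (u + ū))` and `1`
on this rectangle, the estimate holds with the constant `exp (C (u + ū))`, which is smaller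
than `C'`.
-/

section Divergence

variable {α E : Type*} [MeasurableSpace α] {μ : Measure α} [SFinite μ]
  [NormedAddCommGroup E] [NormedSpace ℝ E] [CompleteSpace E] {s : Set α} {a b c d : ℝ}

lemma setIntegral_prod_Ioo_partialDeriv_snd {G G' : α × ℝ → E} (hs : MeasurableSet s)
    (hcd : c ≤ d) (hG : ∀ x ∈ s, ContinuousOn (fun y => G (x, y)) (Icc c d))
    (hG' : ∀ p ∈ s ×ˢ Ioo c d, HasDerivAt (fun y => G (p.1, y)) (G' p) p.2)
    (hint : IntegrableOn G' (s ×ˢ Ioo c d) (μ.prod volume)) :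
    ∫ p in s ×ˢ Ioo c d, G' p ∂μ.prod volume = ∫ x in s, (G (x, d) - G (x, c)) ∂μ := by
  have slice_integrable : ∀ᵐ x ∂μ.restrict s, IntegrableOn (fun y => G' (x, y)) (Ioo c d) := by
    rw [IntegrableOn, ← Measure.prod_restrict] at hint
    exact hint.prod_right_ae
  rw [setIntegral_prod _ hint]
  refine integral_congr_ae ?_
  filter_upwards [slice_integrable, ae_restrict_mem hs] with x hx hxs
  rw [← integral_Ioc_eq_integral_Ioo, ← intervalIntegral.integral_of_le hcd]
  exact integral_eq_sub_of_hasDerivAt_of_le hcd (hG x hxs) (fun y hy => hG' (x, y) ⟨hxs, hy⟩)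
    ((intervalIntegrable_iff_integrableOn_Ioo_of_le hcd).2 hx)

lemma setIntegral_Ioo_prod_partialDeriv_fst {F F' : ℝ × α → E} (hs : MeasurableSet s)
    (hab : a ≤ b) (hF : ∀ y ∈ s, ContinuousOn (fun x => F (x, y)) (Icc a b))
    (hF' : ∀ p ∈ Ioo a b ×ˢ s, HasDerivAt (fun x => F (x, p.2)) (F' p) p.1)
    (hint : IntegrableOn F' (Ioo a b ×ˢ s) (volume.prod μ)) :
    ∫ p in Ioo a b ×ˢ s, F' p ∂volume.prod μ = ∫ y in s, (F (b, y) - F (a, y)) ∂μ := by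
  rw [← setIntegral_prod_swap]
  exact setIntegral_prod_Ioo_partialDeriv_snd (G := F ∘ Prod.swap) hs hab hF
    (fun p hp => hF' p.swap hp.symm) hint.swap

end Divergence

section Slices

variable {X Y Z : Type*} [TopologicalSpace X] [TopologicalSpace Y] [TopologicalSpace Z]
  {f : X × Y → Z} {s : Set X} {t : Set Y}

lemma continuousOn_slice_fst (hf : ContinuousOn f (s ×ˢ t)) {y : Y} (hy : y ∈ t) :
    ContinuousOn (fun x => f (x, y)) s :=
  hf.comp (by fun_prop) fun _ hx => ⟨hx, hy⟩

lemma continuousOn_slice_snd (hf : ContinuousOn f (s ×ˢ t)) {x : X} (hx : x ∈ s) :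
    ContinuousOn (fun y => f (x, y)) t :=
  hf.comp (by fun_prop) fun _ hy => ⟨hx, hy⟩

end Slices

section IntervalIntegral

variable {a b m M : ℝ} {w h : ℝ → ℝ}

lemma const_mul_integral_le_integral_mul (hab : a ≤ b) (hw : ContinuousOn w (Icc a b))
    (hh : ContinuousOn h (Icc a b)) (hh0 : ∀ t ∈ Icc a b, 0 ≤ h t)
    (hm : ∀ t ∈ Icc a b, m ≤ w t) : m * ∫ t in a..b, h t ≤ ∫ t in a..b, w t * h t := by
  rw [← intervalIntegral.integral_const_mul]
  exact integral_mono_on hab ((continuousOn_const.mul hh).intervalIntegrable_of_Icc hab)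
    ((hw.mul hh).intervalIntegrable_of_Icc hab)
    fun t ht => mul_le_mul_of_nonneg_right (hm t ht) (hh0 t ht)

lemma integral_mul_le_const_mul_integral (hab : a ≤ b) (hw : ContinuousOn w (Icc a b))
    (hh : ContinuousOn h (Icc a b)) (hh0 : ∀ t ∈ Icc a b, 0 ≤ h t)
    (hM : ∀ t ∈ Icc a b, w t ≤ M) : ∫ t in a..b, w t * h t ≤ M * ∫ t in a..b, h t := by
  rw [← intervalIntegral.integral_const_mul]
  exact integral_mono_on hab ((hw.mul hh).intervalIntegrable_of_Icc hab)
    ((continuousOn_const.mul hh).intervalIntegrable_of_Icc hab)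
    fun t ht => mul_le_mul_of_nonneg_right (hM t ht) (hh0 t ht)

end IntervalIntegral

section Exp

variable {φ h : ℝ → ℝ} {φ' h' x y : ℝ}

lemma hasDerivAt_exp_neg_mul (hφ : HasDerivAt φ φ' x) (hh : HasDerivAt h h' x) :
    HasDerivAt (fun t => Real.exp (-φ t) * h t) (Real.exp (-φ x) * (h' - φ' * h x)) x :=
  (hφ.fun_neg.exp.mul hh).congr_deriv (by ring)

lemma exp_le_one_add_mul_exp (x : ℝ) : Real.exp x ≤ 1 + x * Real.exp x := by
  have h : (1 - x) * Real.exp x ≤ Real.exp (-x) * Real.exp x :=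
    mul_le_mul_of_nonneg_right (Real.one_sub_le_exp_neg x) (Real.exp_pos x).le
  rw [← Real.exp_add, neg_add_cancel, Real.exp_zero] at h
  linarith

lemma exp_add_le_mul_exp_mul (hx : 0 ≤ x) (hy : 0 ≤ y) :
    Real.exp (x + y) ≤ (1 + x * Real.exp x) * Real.exp ((1 + x * Real.exp x) * y) := by
  have hy_le : y ≤ (1 + x * Real.exp x) * y :=
    le_mul_of_one_le_left hy (le_add_of_nonneg_right (by positivity))
  rw [Real.exp_add]
  gcongr
  exact exp_le_one_add_mul_exp x

end Exp

section Rectangle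

variable {a b c d : ℝ} {f g fu gv : ℝ × ℝ → ℝ}

lemma outflow_le_inflow_of_divergence_nonpos (hab : a ≤ b) (hcd : c ≤ d)
    (hf : ContinuousOn f (Icc a b ×ˢ Icc c d)) (hg : ContinuousOn g (Icc a b ×ˢ Icc c d))
    (hfu : ∀ p ∈ Ioo a b ×ˢ Ioo c d, HasDerivAt (fun t => f (t, p.2)) (fu p) p.1)
    (hgv : ∀ p ∈ Ioo a b ×ˢ Ioo c d, HasDerivAt (fun v => g (p.1, v)) (gv p) p.2)
    (hfu_int : IntegrableOn fu (Ioo a b ×ˢ Ioo c d))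
    (hgv_int : IntegrableOn gv (Ioo a b ×ˢ Ioo c d))
    (hdiv : ∀ p ∈ Ioo a b ×ˢ Ioo c d, fu p + gv p ≤ 0) :
    (∫ v in c..d, f (b, v)) + (∫ t in a..b, g (t, d)) ≤
      (∫ v in c..d, f (a, v)) + (∫ t in a..b, g (t, c)) := by
  have f_slice {x : ℝ} (hx : x ∈ Icc a b) : IntervalIntegrable (fun v => f (x, v)) volume c d :=
    (continuousOn_slice_snd hf hx).intervalIntegrable_of_Icc hcd
  have g_slice {y : ℝ} (hy : y ∈ Icc c d) : IntervalIntegrable (fun t => g (t, y)) volume a b :=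
    (continuousOn_slice_fst hg hy).intervalIntegrable_of_Icc hab
  have integral_fu : ∫ p in Ioo a b ×ˢ Ioo c d, fu p =
      (∫ v in c..d, f (b, v)) - ∫ v in c..d, f (a, v) := by
    rw [← intervalIntegral.integral_sub (f_slice ⟨hab, le_rfl⟩) (f_slice ⟨le_rfl, hab⟩),
      intervalIntegral.integral_of_le hcd, integral_Ioc_eq_integral_Ioo]
    exact setIntegral_Ioo_prod_partialDeriv_fst measurableSet_Ioo hab
      (fun v hv => continuousOn_slice_fst hf (Ioo_subset_Icc_self hv)) hfu hfu_int
  have integral_gv : ∫ p in Ioo a b ×ˢ Ioo c d, gv p =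
      (∫ t in a..b, g (t, d)) - ∫ t in a..b, g (t, c) := by
    rw [← intervalIntegral.integral_sub (g_slice ⟨hcd, le_rfl⟩) (g_slice ⟨le_rfl, hcd⟩),
      intervalIntegral.integral_of_le hab, integral_Ioc_eq_integral_Ioo]
    exact setIntegral_prod_Ioo_partialDeriv_snd measurableSet_Ioo hcd
      (fun t ht => continuousOn_slice_snd hg (Ioo_subset_Icc_self ht)) hgv hgv_int
  have integral_div_nonpos :
      (∫ p in Ioo a b ×ˢ Ioo c d, fu p) + ∫ p in Ioo a b ×ˢ Ioo c d, gv p ≤ 0 := by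
    rw [← MeasureTheory.integral_add hfu_int hgv_int]
    exact setIntegral_nonpos (measurableSet_Ioo.prod measurableSet_Ioo) hdiv
  linarith

/-- The weight `exp (-C (u + ū))`, an integrating factor in both variables for the differential
inequality `∂f/∂u + ∂g/∂ū ≤ C (f + g)`. -/
noncomputable def expWeight (C : ℝ) (p : ℝ × ℝ) : ℝ := Real.exp (-(C * (p.1 + p.2)))

lemma expWeight_pos (C : ℝ) (p : ℝ × ℝ) : 0 < expWeight C p := Real.exp_pos _

lemma continuous_expWeight (C : ℝ) : Continuous (expWeight C) := by
  unfold expWeight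
  fun_prop

lemma antitone_expWeight {C : ℝ} (hC : 0 ≤ C) : Antitone (expWeight C) := fun _ _ hpq =>
  Real.exp_le_exp.2 <| neg_le_neg <| mul_le_mul_of_nonneg_left (add_le_add hpq.1 hpq.2) hC

lemma integrableOn_expWeight_mul_sub (C : ℝ) (hf : ContinuousOn f (Icc a b ×ˢ Icc c d))
    (hfu : IntegrableOn fu (Ioo a b ×ˢ Ioo c d)) :
    IntegrableOn (fun p => expWeight C p * (fu p - C * f p)) (Ioo a b ×ˢ Ioo c d) := by
  have rect_subset : Ioo a b ×ˢ Ioo c d ⊆ Icc a b ×ˢ Icc c d :=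
    prod_mono Ioo_subset_Icc_self Ioo_subset_Icc_self
  have rect_compact : IsCompact (Icc a b ×ˢ Icc c d) := isCompact_Icc.prod isCompact_Icc
  have f_int : IntegrableOn f (Ioo a b ×ˢ Ioo c d) :=
    (hf.integrableOn_compact rect_compact).mono_set rect_subset
  exact (hfu.sub (f_int.const_mul C)).continuousOn_mul_of_subset
    (continuous_expWeight C).continuousOn rect_compact
    (measurableSet_Ioo.prod measurableSet_Ioo) rect_subset

lemma weighted_outflow_le_weighted_inflow {C : ℝ} (hab : a ≤ b) (hcd : c ≤ d)
    (hf : ContinuousOn f (Icc a b ×ˢ Icc c d)) (hg : ContinuousOn g (Icc a b ×ˢ Icc c d))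
    (hfu : ∀ p ∈ Ioo a b ×ˢ Ioo c d, HasDerivAt (fun t => f (t, p.2)) (fu p) p.1)
    (hgv : ∀ p ∈ Ioo a b ×ˢ Ioo c d, HasDerivAt (fun v => g (p.1, v)) (gv p) p.2)
    (hfu_int : IntegrableOn fu (Ioo a b ×ˢ Ioo c d))
    (hgv_int : IntegrableOn gv (Ioo a b ×ˢ Ioo c d))
    (hineq : ∀ p ∈ Ioo a b ×ˢ Ioo c d, fu p + gv p ≤ C * (f p + g p)) :
    (∫ v in c..d, expWeight C (b, v) * f (b, v)) + (∫ t in a..b, expWeight C (t, d) * g (t, d)) ≤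
      (∫ v in c..d, expWeight C (a, v) * f (a, v)) +
        (∫ t in a..b, expWeight C (t, c) * g (t, c)) := by
  have w_cont : ContinuousOn (expWeight C) (Icc a b ×ˢ Icc c d) :=
    (continuous_expWeight C).continuousOn
  refine outflow_le_inflow_of_divergence_nonpos hab hcd (w_cont.mul hf) (w_cont.mul hg)
    (fun p hp => hasDerivAt_exp_neg_mul ?_ (hfu p hp))
    (fun p hp => hasDerivAt_exp_neg_mul ?_ (hgv p hp))
    (integrableOn_expWeight_mul_sub C hf hfu_int) (integrableOn_expWeight_mul_sub C hg hgv_int)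
    fun p hp => ?_
  · simpa using ((hasDerivAt_id p.1).add_const p.2).const_mul C
  · simpa using ((hasDerivAt_id p.2).const_add p.1).const_mul C
  · calc expWeight C p * (fu p - C * f p) + expWeight C p * (gv p - C * g p)
        = expWeight C p * (fu p + gv p - C * (f p + g p)) := by ring
      _ ≤ 0 := mul_nonpos_of_nonneg_of_nonpos (expWeight_pos C p).le (sub_nonpos.2 (hineq p hp))

lemma expWeight_mul_outflow_le_weighted_outflow {C : ℝ} (hC : 0 ≤ C) (hab : a ≤ b) (hcd : c ≤ d)
    (hf0 : ∀ p ∈ Icc a b ×ˢ Icc c d, 0 ≤ f p) (hg0 : ∀ p ∈ Icc a b ×ˢ Icc c d, 0 ≤ g p)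
    (hf : ContinuousOn f (Icc a b ×ˢ Icc c d)) (hg : ContinuousOn g (Icc a b ×ˢ Icc c d)) :
    expWeight C (b, d) * ((∫ v in c..d, f (b, v)) + (∫ t in a..b, g (t, d))) ≤
      (∫ v in c..d, expWeight C (b, v) * f (b, v)) +
        (∫ t in a..b, expWeight C (t, d) * g (t, d)) := by
  have hb : b ∈ Icc a b := ⟨hab, le_rfl⟩
  have hd : d ∈ Icc c d := ⟨hcd, le_rfl⟩
  have w_cont : ContinuousOn (expWeight C) (Icc a b ×ˢ Icc c d) :=
    (continuous_expWeight C).continuousOn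
  rw [mul_add]
  apply add_le_add
  · exact const_mul_integral_le_integral_mul hcd (continuousOn_slice_snd w_cont hb)
      (continuousOn_slice_snd hf hb) (fun v hv => hf0 _ ⟨hb, hv⟩)
      fun v hv => antitone_expWeight hC (show (b, v) ≤ (b, d) from ⟨le_rfl, hv.2⟩)
  · exact const_mul_integral_le_integral_mul hab (continuousOn_slice_fst w_cont hd)
      (continuousOn_slice_fst hg hd) (fun t ht => hg0 _ ⟨ht, hd⟩)
      fun t ht => antitone_expWeight hC (show (t, d) ≤ (b, d) from ⟨ht.2, le_rfl⟩)

lemma weighted_inflow_le_expWeight_mul_inflow {C : ℝ} (hC : 0 ≤ C) (hab : a ≤ b) (hcd : c ≤ d)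
    (hf0 : ∀ p ∈ Icc a b ×ˢ Icc c d, 0 ≤ f p) (hg0 : ∀ p ∈ Icc a b ×ˢ Icc c d, 0 ≤ g p)
    (hf : ContinuousOn f (Icc a b ×ˢ Icc c d)) (hg : ContinuousOn g (Icc a b ×ˢ Icc c d)) :
    (∫ v in c..d, expWeight C (a, v) * f (a, v)) + (∫ t in a..b, expWeight C (t, c) * g (t, c)) ≤
      expWeight C (a, c) * ((∫ v in c..d, f (a, v)) + (∫ t in a..b, g (t, c))) := by
  have ha : a ∈ Icc a b := ⟨le_rfl, hab⟩
  have hc : c ∈ Icc c d := ⟨le_rfl, hcd⟩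
  have w_cont : ContinuousOn (expWeight C) (Icc a b ×ˢ Icc c d) :=
    (continuous_expWeight C).continuousOn
  rw [mul_add]
  apply add_le_add
  · exact integral_mul_le_const_mul_integral hcd (continuousOn_slice_snd w_cont ha)
      (continuousOn_slice_snd hf ha) (fun v hv => hf0 _ ⟨ha, hv⟩)
      fun v hv => antitone_expWeight hC (show (a, c) ≤ (a, v) from ⟨le_rfl, hv.1⟩)
  · exact integral_mul_le_const_mul_integral hab (continuousOn_slice_fst w_cont hc)
      (continuousOn_slice_fst hg hc) (fun t ht => hg0 _ ⟨ht, hc⟩)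
      fun t ht => antitone_expWeight hC (show (a, c) ≤ (t, c) from ⟨ht.1, le_rfl⟩)

theorem stmt_7_general {C : ℝ} (hC : 0 ≤ C) (hab : a ≤ b) (hcd : c ≤ d)
    (hf0 : ∀ p ∈ Icc a b ×ˢ Icc c d, 0 ≤ f p) (hg0 : ∀ p ∈ Icc a b ×ˢ Icc c d, 0 ≤ g p)
    (hf : ContinuousOn f (Icc a b ×ˢ Icc c d)) (hg : ContinuousOn g (Icc a b ×ˢ Icc c d))
    (hfu : ∀ p ∈ Ioo a b ×ˢ Ioo c d, HasDerivAt (fun t => f (t, p.2)) (fu p) p.1)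
    (hgv : ∀ p ∈ Ioo a b ×ˢ Ioo c d, HasDerivAt (fun v => g (p.1, v)) (gv p) p.2)
    (hfu_int : IntegrableOn fu (Ioo a b ×ˢ Ioo c d))
    (hgv_int : IntegrableOn gv (Ioo a b ×ˢ Ioo c d))
    (hineq : ∀ p ∈ Ioo a b ×ˢ Ioo c d, fu p + gv p ≤ C * (f p + g p)) :
    (∫ v in c..d, f (b, v)) + (∫ t in a..b, g (t, d)) ≤
      Real.exp (C * (b - a + (d - c))) *
        ((∫ v in c..d, f (a, v)) + (∫ t in a..b, g (t, c))) := by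
  have weight_ratio : expWeight C (a, c) =
      expWeight C (b, d) * Real.exp (C * (b - a + (d - c))) := by
    rw [expWeight, expWeight, ← Real.exp_add]
    ring_nf
  refine le_of_mul_le_mul_left ?_ (expWeight_pos C (b, d))
  rw [← mul_assoc, ← weight_ratio]
  calc expWeight C (b, d) * ((∫ v in c..d, f (b, v)) + (∫ t in a..b, g (t, d)))
      ≤ (∫ v in c..d, expWeight C (b, v) * f (b, v)) +
          (∫ t in a..b, expWeight C (t, d) * g (t, d)) :=
        expWeight_mul_outflow_le_weighted_outflow hC hab hcd hf0 hg0 hf hg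
    _ ≤ (∫ v in c..d, expWeight C (a, v) * f (a, v)) +
          (∫ t in a..b, expWeight C (t, c) * g (t, c)) :=
        weighted_outflow_le_weighted_inflow hab hcd hf hg hfu hgv hfu_int hgv_int hineq
    _ ≤ expWeight C (a, c) * ((∫ v in c..d, f (a, v)) + (∫ t in a..b, g (t, c))) :=
        weighted_inflow_le_expWeight_mul_inflow hC hab hcd hf0 hg0 hf hg

end Rectangle

lemma exp_mul_add_le_gronwall_const {C us ubs : ℝ} (hC : 0 ≤ C) (hus : 0 ≤ us) (hubs : 0 ≤ ubs) :
    Real.exp (C * (us + ubs)) ≤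
      (1 + C * Real.exp (C * us) * us) *
          Real.exp (C * (1 + C * Real.exp (C * us) * us) * ubs) +
        Real.exp (C * us) *
          (1 + C * (1 + C * Real.exp (C * us) * us) * ubs *
            Real.exp (C * (1 + C * Real.exp (C * us) * us) * ubs)) :=
  calc Real.exp (C * (us + ubs))
      ≤ (1 + C * us * Real.exp (C * us)) *
          Real.exp ((1 + C * us * Real.exp (C * us)) * (C * ubs)) := by
        rw [mul_add]
        exact exp_add_le_mul_exp_mul (mul_nonneg hC hus) (mul_nonneg hC hubs)
    _ = (1 + C * Real.exp (C * us) * us) *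
          Real.exp (C * (1 + C * Real.exp (C * us) * us) * ubs) := by ring_nf
    _ ≤ _ := le_add_of_nonneg_right (by positivity)

/-- two-variable Grönwall lemma. Let `f, g : D → ℝ` be nonnegative
continuous functions whose partial derivatives `∂f/∂u` and `∂g/∂ū` exist and are
continuous on `D` and satisfy `∂f/∂u + ∂g/∂ū ≤ C (f + g)` on `D` with `C ≥ 0`.  With
`A := 1 + C e^{C u_*} u_*` and
`C' := A exp(C A ū_*) + e^{C u_*} (1 + C A ū_* exp(C A ū_*))`, for all `(u,ū) ∈ D`:
`∫₀^ū f(u,ū') dū' + ∫₀ᵘ g(u',ū) du' ≤ C'·( ∫₀^ū f(0,ū') dū' + ∫₀ᵘ g(u',0) du' )`. -/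
theorem stmt_7 (us ubs : ℝ) (hus : 0 < us) (hubs : 0 < ubs)
    (C : ℝ) (hC : 0 ≤ C)
    (f g fu gub : ℝ × ℝ → ℝ)
    (hf0 : ∀ p ∈ Dset us ubs, 0 ≤ f p) (hg0 : ∀ p ∈ Dset us ubs, 0 ≤ g p)
    (hfc : ContinuousOn f (Dset us ubs)) (hgc : ContinuousOn g (Dset us ubs))
    (hfu : ∀ p ∈ Dset us ubs,
      HasDerivWithinAt (fun t => f (t, p.2)) (fu p) (Set.Icc 0 us) p.1)
    (hgub : ∀ p ∈ Dset us ubs,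
      HasDerivWithinAt (fun v => g (p.1, v)) (gub p) (Set.Icc 0 ubs) p.2)
    (hfuc : ContinuousOn fu (Dset us ubs)) (hgubc : ContinuousOn gub (Dset us ubs))
    (hineq : ∀ p ∈ Dset us ubs, fu p + gub p ≤ C * (f p + g p)) :
    ∀ u ∈ Set.Icc (0:ℝ) us, ∀ ub ∈ Set.Icc (0:ℝ) ubs,
      (∫ v in (0:ℝ)..ub, f (u, v)) + (∫ t in (0:ℝ)..u, g (t, ub)) ≤
        ((1 + C * Real.exp (C * us) * us) *
            Real.exp (C * (1 + C * Real.exp (C * us) * us) * ubs) +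
          Real.exp (C * us) *
            (1 + C * (1 + C * Real.exp (C * us) * us) * ubs *
              Real.exp (C * (1 + C * Real.exp (C * us) * us) * ubs))) *
        ((∫ v in (0:ℝ)..ub, f (0, v)) + (∫ t in (0:ℝ)..u, g (t, 0))) := by
  intro u hu ub hub
  have closed_sub : Icc 0 u ×ˢ Icc 0 ub ⊆ Dset us ubs :=
    prod_mono (Icc_subset_Icc_right hu.2) (Icc_subset_Icc_right hub.2)
  have open_sub : Ioo 0 u ×ˢ Ioo 0 ub ⊆ Dset us ubs :=
    (prod_mono Ioo_subset_Icc_self Ioo_subset_Icc_self).trans closed_sub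
  have integrable_of_continuous {k : ℝ × ℝ → ℝ} (hk : ContinuousOn k (Dset us ubs)) :
      IntegrableOn k (Ioo 0 u ×ˢ Ioo 0 ub) :=
    (hk.integrableOn_compact (isCompact_Icc.prod isCompact_Icc)).mono_set open_sub
  have inflow_nonneg : 0 ≤ (∫ v in (0:ℝ)..ub, f (0, v)) + ∫ t in (0:ℝ)..u, g (t, 0) :=
    add_nonneg
      (integral_nonneg hub.1 fun v hv => hf0 _ (closed_sub ⟨⟨le_rfl, hu.1⟩, hv⟩))
      (integral_nonneg hu.1 fun t ht => hg0 _ (closed_sub ⟨ht, ⟨le_rfl, hub.1⟩⟩))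
  refine (stmt_7_general hC hu.1 hub.1 (fun p hp => hf0 p (closed_sub hp))
    (fun p hp => hg0 p (closed_sub hp)) (hfc.mono closed_sub) (hgc.mono closed_sub)
    (fun p hp => (hfu p (open_sub hp)).hasDerivAt (Icc_mem_nhds hp.1.1 (hp.1.2.trans_le hu.2)))
    (fun p hp => (hgub p (open_sub hp)).hasDerivAt (Icc_mem_nhds hp.2.1 (hp.2.2.trans_le hub.2)))
    (integrable_of_continuous hfuc) (integrable_of_continuous hgubc)
    fun p hp => hineq p (open_sub hp)).trans (mul_le_mul_of_nonneg_right ?_ inflow_nonneg)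
  calc Real.exp (C * (u - 0 + (ub - 0))) ≤ Real.exp (C * (us + ubs)) := by
        rw [sub_zero, sub_zero]
        gcongr
        exacts [hu.2, hub.2]
    _ ≤ _ := exp_mul_add_le_gronwall_const hC hus.le hubs.le
end

section
/- Let W = (α_W, β_W, ρ_W, σ_W, β̄_W, ᾱ_W) ∈ 𝒱 and define the linear map 𝔏_W : 𝒱 → ℝ² × ℝ² × ℝ × ℝ by 𝔏_W(α, β, ρ, σ, β̄, ᾱ) = ( 2(ᾱ·β_W − ᾱ_W·β) + 6(σ·*β̄_W − σ_W·*β̄) + 6(ρ_W·β̄ − ρ·β̄_W) , 2(α_W·β̄ − α·β̄_W) + 6(ρ·β_W − ρ_W·β) + 6(σ·*β_W − σ_W·*β) , (1/2)(α_W·ᾱ − ᾱ_W·α) + 2(β̄·β_W − β·β̄_W) , (1/2)((*ᾱ)·α_W − (*ᾱ_W)·α) + 2((*β̄)·β_W − β·(*β̄_W)) ). If W ≠ 0 (i.e. at least one of α_W, β_W, ρ_W, σ_W, β̄_W, ᾱ_W is nonzero), then 𝔏_W is not the zero map: there exists Ψ ∈ 𝒱 with 𝔏_W(Ψ) ≠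 0. -/
open Matrix Finset

noncomputable section

/-- The 2×2 matrix `ε` with `ε₁₂ = 1`, `ε₂₁ = −1`, `ε₁₁ = ε₂₂ = 0`. -/
def eps : Matrix (Fin 2) (Fin 2) ℝ := !![0, 1; -1, 0]

/-- `Ŝ`: the (2-dimensional) space of real 2×2 symmetric traceless matrices. -/
def hatS : Submodule ℝ (Matrix (Fin 2) (Fin 2) ℝ) where
  carrier := {A | A.IsSymm ∧ A.trace = 0}
  add_mem' := by
    rintro A B ⟨hA1, hA2⟩ ⟨hB1, hB2⟩
    refine ⟨?_, ?_⟩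
    · show (A + B)ᵀ = A + B
      rw [Matrix.transpose_add]
      rw [show Aᵀ = A from hA1, show Bᵀ = B from hB1]
    · simp [Matrix.trace_add, hA2, hB2]
  zero_mem' := by
    refine ⟨?_, ?_⟩
    · show (0 : Matrix (Fin 2) (Fin 2) ℝ)ᵀ = 0
      simp
    · simp
  smul_mem' := by
    rintro c A ⟨hA1, hA2⟩
    refine ⟨?_, ?_⟩
    · show (c • A)ᵀ = c • A
      rw [Matrix.transpose_smul, show Aᵀ = A from hA1]
    · simp [Matrix.trace_smul, hA2]

/-- `𝒱 = Ŝ × ℝ² × ℝ × ℝ × ℝ² × Ŝ`: tuples `(α, β, ρ, σ, β̄, ᾱ)`. -/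
abbrev VV : Type := ↥hatS × (Fin 2 → ℝ) × ℝ × ℝ × (Fin 2 → ℝ) × ↥hatS

/-- Full contraction of symmetric traceless matrices: `A·B = Σ_{i,j} A_{ij} B_{ij}`. -/
def dotM (A B : Matrix (Fin 2) (Fin 2) ℝ) : ℝ := ∑ i, ∑ j, A i j * B i j

/-- Standard inner product on ℝ². -/
def dotV (u v : Fin 2 → ℝ) : ℝ := ∑ i, u i * v i

/-- The map `𝔏_W : 𝒱 → ℝ² × ℝ² × ℝ × ℝ`, where `W = (α_W, β_W, ρ_W, σ_W, β̄_W, ᾱ_W)`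
and `Ψ = (α, β, ρ, σ, β̄, ᾱ)`:
`𝔏_W(Ψ) = ( 2(ᾱ·β_W − ᾱ_W·β) + 6(σ·*β̄_W − σ_W·*β̄) + 6(ρ_W·β̄ − ρ·β̄_W) ,
2(α_W·β̄ − α·β̄_W) + 6(ρ·β_W − ρ_W·β) + 6(σ·*β_W − σ_W·*β) ,
(1/2)(α_W·ᾱ − ᾱ_W·α) + 2(β̄·β_W − β·β̄_W) ,
(1/2)((*ᾱ)·α_W − (*ᾱ_W)·α) + 2((*β̄)·β_W − β·(*β̄_W)) )`. -/
def LW (W Ψ : VV) : (Fin 2 → ℝ) × (Fin 2 → ℝ) × ℝ × ℝ :=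
  ( (2:ℝ) • ((Ψ.2.2.2.2.2 : Matrix (Fin 2) (Fin 2) ℝ).mulVec W.2.1
        - (W.2.2.2.2.2 : Matrix (Fin 2) (Fin 2) ℝ).mulVec Ψ.2.1)
    + (6:ℝ) • (Ψ.2.2.2.1 • eps.mulVec W.2.2.2.2.1 - W.2.2.2.1 • eps.mulVec Ψ.2.2.2.2.1)
    + (6:ℝ) • (W.2.2.1 • Ψ.2.2.2.2.1 - Ψ.2.2.1 • W.2.2.2.2.1),
    (2:ℝ) • ((W.1 : Matrix (Fin 2) (Fin 2) ℝ).mulVec Ψ.2.2.2.2.1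
        - (Ψ.1 : Matrix (Fin 2) (Fin 2) ℝ).mulVec W.2.2.2.2.1)
    + (6:ℝ) • (Ψ.2.2.1 • W.2.1 - W.2.2.1 • Ψ.2.1)
    + (6:ℝ) • (Ψ.2.2.2.1 • eps.mulVec W.2.1 - W.2.2.2.1 • eps.mulVec Ψ.2.1),
    (1/2 : ℝ) * (dotM (W.1 : Matrix (Fin 2) (Fin 2) ℝ) (Ψ.2.2.2.2.2 : Matrix (Fin 2) (Fin 2) ℝ)
        - dotM (W.2.2.2.2.2 : Matrix (Fin 2) (Fin 2) ℝ) (Ψ.1 : Matrix (Fin 2) (Fin 2) ℝ))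
    + 2 * (dotV Ψ.2.2.2.2.1 W.2.1 - dotV Ψ.2.1 W.2.2.2.2.1),
    (1/2 : ℝ) * (dotM (eps * (Ψ.2.2.2.2.2 : Matrix (Fin 2) (Fin 2) ℝ))
          (W.1 : Matrix (Fin 2) (Fin 2) ℝ)
        - dotM (eps * (W.2.2.2.2.2 : Matrix (Fin 2) (Fin 2) ℝ))
          (Ψ.1 : Matrix (Fin 2) (Fin 2) ℝ))
    + 2 * (dotV (eps.mulVec Ψ.2.2.2.2.1) W.2.1 - dotV Ψ.2.1 (eps.mulVec W.2.2.2.2.1)) )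

/-! Testing `𝔏_W` on `Ψ` with a single nonzero slot isolates the components of `W`: the `ρ`-slot
returns `β_W` and `β̄_W`; a vector `v` in the `β̄`-slot returns `α_W·v` and `ρ_W v − σ_W *v`, which
determines `ρ_W` and `σ_W` because `v ⟂ *v`; a vector in the `β`-slot returns `ᾱ_W·v`. -/

theorem linearIndependent_pair_of_dotProduct_eq_zero {n R : Type*} [Fintype n] [CommRing R]
    [LinearOrder R] [IsStrictOrderedRing R] {v w : n → R} (hv : v ≠ 0) (hw : w ≠ 0)
    (hvw : v ⬝ᵥ w = 0) : LinearIndependent R ![v, w] := by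
  refine LinearIndependent.pair_iff.mpr fun s t hst => ⟨?_, ?_⟩
  · have hs : s * (v ⬝ᵥ v) = 0 := by
      simpa [dotProduct_add, hvw] using congrArg (v ⬝ᵥ ·) hst
    exact (mul_eq_zero.mp hs).resolve_right (dotProduct_self_eq_zero.not.mpr hv)
  · have ht : t * (w ⬝ᵥ w) = 0 := by
      simpa [dotProduct_add, dotProduct_comm w v, hvw] using congrArg (w ⬝ᵥ ·) hst
    exact (mul_eq_zero.mp ht).resolve_right (dotProduct_self_eq_zero.not.mpr hw)

theorem dotProduct_eps_mulVec_self (v : Fin 2 → ℝ) : v ⬝ᵥ eps *ᵥ v = 0 := by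
  simp only [eps, dotProduct, mulVec, Fin.sum_univ_two, of_apply, cons_val', cons_val_zero,
    cons_val_one, cons_val_fin_one]
  ring

theorem eps_mul_eps : eps * eps = -1 := by
  ext i j
  fin_cases i <;> fin_cases j <;> simp [eps]

theorem eps_mulVec_ne_zero {v : Fin 2 → ℝ} (hv : v ≠ 0) : eps *ᵥ v ≠ 0 := by
  intro h
  have hsq : eps *ᵥ eps *ᵥ v = -v := by rw [mulVec_mulVec, eps_mul_eps, neg_mulVec, one_mulVec]
  exact hv (by simpa [h] using hsq)

theorem linearIndependent_pair_eps_mulVec {v : Fin 2 → ℝ} (hv : v ≠ 0) :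
    LinearIndependent ℝ ![v, eps *ᵥ v] :=
  linearIndependent_pair_of_dotProduct_eq_zero hv (eps_mulVec_ne_zero hv)
    (dotProduct_eps_mulVec_self v)

theorem dotV_eq_dotProduct (u v : Fin 2 → ℝ) : dotV u v = u ⬝ᵥ v := rfl

section SingleSlot

variable (α αbar : hatS) (β βbar : Fin 2 → ℝ) (ρ σ : ℝ)

theorem LW_apply_rho (r : ℝ) :
    LW (α, β, ρ, σ, βbar, αbar) (0, 0, r, 0, 0, 0) = (-((6 * r) • βbar), (6 * r) • β, 0, 0) := by
  simp [LW, dotM, dotV_eq_dotProduct, mul_smul]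

theorem LW_apply_betaBar (v : Fin 2 → ℝ) :
    LW (α, β, ρ, σ, βbar, αbar) (0, 0, 0, 0, v, 0) =
      ((6 : ℝ) • (ρ • v - σ • eps *ᵥ v), (2 : ℝ) • α.1 *ᵥ v,
        2 * (v ⬝ᵥ β), 2 * (eps *ᵥ v ⬝ᵥ β)) := by
  simp [LW, dotM, dotV_eq_dotProduct, smul_sub, neg_add_eq_sub, -mulVec_fin_two]

theorem LW_apply_beta (v : Fin 2 → ℝ) :
    LW (α, β, ρ, σ, βbar, αbar) (0, v, 0, 0, 0, 0) =
      (-((2 : ℝ) • αbar.1 *ᵥ v), -((6 : ℝ) • (ρ • v + σ • eps *ᵥ v)),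
        -(2 * (v ⬝ᵥ βbar)), -(2 * (v ⬝ᵥ eps *ᵥ βbar))) := by
  simp [LW, dotM, dotV_eq_dotProduct, add_comm, -mulVec_fin_two, -vec2_dotProduct]

end SingleSlot

section Vanishing

variable {α αbar : hatS} {β βbar : Fin 2 → ℝ} {ρ σ : ℝ}

theorem beta_betaBar_eq_zero_of_forall_LW_eq_zero
    (h : ∀ Ψ, LW (α, β, ρ, σ, βbar, αbar) Ψ = 0) : β = 0 ∧ βbar = 0 := by
  have hρ := h (0, 0, 1, 0, 0, 0)
  simpa [LW_apply_rho, Prod.ext_iff, and_comm] using hρ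

theorem rho_sigma_eq_zero_of_forall_LW_eq_zero
    (h : ∀ Ψ, LW (α, β, ρ, σ, βbar, αbar) Ψ = 0) : ρ = 0 ∧ σ = 0 := by
  obtain ⟨v, hv⟩ := exists_ne (0 : Fin 2 → ℝ)
  have hcomb : ρ • v + (-σ) • eps *ᵥ v = 0 := by
    simpa [LW_apply_betaBar, sub_eq_add_neg] using congrArg Prod.fst (h (0, 0, 0, 0, v, 0))
  simpa using LinearIndependent.pair_iff.mp (linearIndependent_pair_eps_mulVec hv) ρ (-σ) hcomb

theorem alpha_eq_zero_of_forall_LW_eq_zero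
    (h : ∀ Ψ, LW (α, β, ρ, σ, βbar, αbar) Ψ = 0) : α = 0 := by
  refine Subtype.ext (ext_iff_mulVec.mpr fun v => ?_)
  simpa [LW_apply_betaBar] using congrArg (fun x => x.2.1) (h (0, 0, 0, 0, v, 0))

theorem alphaBar_eq_zero_of_forall_LW_eq_zero
    (h : ∀ Ψ, LW (α, β, ρ, σ, βbar, αbar) Ψ = 0) : αbar = 0 := by
  refine Subtype.ext (ext_iff_mulVec.mpr fun v => ?_)
  simpa [LW_apply_beta] using congrArg Prod.fst (h (0, v, 0, 0, 0, 0))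

end Vanishing

/-- If `W ∈ 𝒱` is nonzero, then the linear map `𝔏_W : 𝒱 → ℝ² × ℝ² × ℝ × ℝ`
is not the zero map: there exists `Ψ ∈ 𝒱` with `𝔏_W(Ψ) ≠ 0`. -/
theorem stmt_10 (W : VV) (hW : W ≠ 0) : ∃ Ψ : VV, LW W Ψ ≠ 0 := by
  contrapose! hW
  obtain ⟨α, β, ρ, σ, βbar, αbar⟩ := W
  obtain ⟨rfl, rfl⟩ := beta_betaBar_eq_zero_of_forall_LW_eq_zero hW
  obtain ⟨rfl, rfl⟩ := rho_sigma_eq_zero_of_forall_LW_eq_zero hW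
  obtain rfl := alpha_eq_zero_of_forall_LW_eq_zero hW
  obtain rfl := alphaBar_eq_zero_of_forall_LW_eq_zero hW
  rfl

end
end

section
/- Let W = (α_W, β_W, ρ_W, σ_W, β̄_W, ᾱ_W) ∈ 𝒱 and define the linear map 𝔏_W : 𝒱 → ℝ² × ℝ² × ℝ × ℝ by 𝔏_W(α, β, ρ, σ, β̄, ᾱ) = ( 2(ᾱ·β_W − ᾱ_W·β) + 6(σ·*β̄_W − σ_W·*β̄) + 6(ρ_W·β̄ − ρ·β̄_W) , 2(α_W·β̄ − α·β̄_W) + 6(ρ·β_W − ρ_W·β) + 6(σ·*β_W − σ_W·*β) , (1/2)(α_W·ᾱ − ᾱ_W·α) + 2(β̄·β_W − β·β̄_W) , (1/2)((*ᾱ)·α_W − (*ᾱ_W)·α) + 2((*β̄)·β_W − β·(*β̄_W)) ). If W ≠ 0, then the kernel of 𝔏_W is a proper linear subspace of 𝒱; in particular, since dim_ℝ 𝒱 = 10, the kernel of 𝔏_W has dimension at most 9. -/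
open Matrix Finset

noncomputable section

theorem dotM_eq_vec_dotProduct_vec (A B : Matrix (Fin 2) (Fin 2) ℝ) :
    dotM A B = vec A ⬝ᵥ vec B := by
  simp only [dotM, dotProduct, Fintype.sum_prod_type, vec]
  exact sum_comm

theorem dotM_self_eq_zero {A : Matrix (Fin 2) (Fin 2) ℝ} : dotM A A = 0 ↔ A = 0 := by
  rw [dotM_eq_vec_dotProduct_vec, dotProduct_self_eq_zero, vec_eq_zero_iff]

namespace hatS

theorem apply_one_zero (A : hatS) : A.1 1 0 = A.1 0 1 :=
  A.2.1.apply 0 1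

theorem apply_one_one (A : hatS) : A.1 1 1 = -A.1 0 0 :=
  eq_neg_of_add_eq_zero_right (trace_fin_two A.1 ▸ A.2.2)

/-- The coordinates `(a, b)` of the symmetric traceless matrix `!![a, b; b, -a]`, as a linear
equivalence `Ŝ ≃ ℝ²`. -/
def coordEquiv : hatS ≃ₗ[ℝ] (Fin 2 → ℝ) where
  toFun A := A.1 0
  invFun v := ⟨!![v 0, v 1; v 1, -v 0], by
    constructor
    · ext i j
      fin_cases i <;> fin_cases j <;> rfl
    · simp [trace_fin_two]⟩
  map_add' _ _ := rfl
  map_smul' _ _ := rfl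
  left_inv A := by
    ext i j
    fin_cases i <;> fin_cases j <;> simp [apply_one_zero, apply_one_one]
  right_inv v := by
    ext i
    fin_cases i <;> rfl

theorem finrank_eq : Module.finrank ℝ hatS = 2 := by
  rw [coordEquiv.finrank_eq, Module.finrank_fin_fun]

end hatS

theorem finrank_VV : Module.finrank ℝ VV = 10 := by
  simp [hatS.finrank_eq]

theorem LW_add (W Ψ Φ : VV) : LW W (Ψ + Φ) = LW W Ψ + LW W Φ := by
  simp only [LW, dotV_eq_dotProduct, dotM_eq_vec_dotProduct_vec, Prod.fst_add, Prod.snd_add,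
    Submodule.coe_add, add_mulVec, mulVec_add, mul_add, vec_add, add_dotProduct, dotProduct_add,
    Prod.mk_add_mk]
  refine Prod.ext ?_ (Prod.ext ?_ (Prod.ext ?_ ?_)) <;> dsimp only
  · module
  · module
  · ring
  · ring

theorem LW_smul (W : VV) (c : ℝ) (Ψ : VV) : LW W (c • Ψ) = c • LW W Ψ := by
  simp only [LW, dotV_eq_dotProduct, dotM_eq_vec_dotProduct_vec, Prod.smul_fst, Prod.smul_snd,
    Submodule.coe_smul, smul_mulVec, mulVec_smul, mul_smul_comm, vec_smul, smul_dotProduct,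
    dotProduct_smul, Prod.smul_mk, smul_eq_mul]
  refine Prod.ext ?_ (Prod.ext ?_ (Prod.ext ?_ ?_)) <;> dsimp only
  · module
  · module
  · ring
  · ring

/-- The map `𝔏_W : 𝒱 → ℝ² × ℝ² × ℝ × ℝ`, bundled as a linear map. -/
def linearLW (W : VV) : VV →ₗ[ℝ] (Fin 2 → ℝ) × (Fin 2 → ℝ) × ℝ × ℝ where
  toFun := LW W
  map_add' := LW_add W
  map_smul' := LW_smul W

theorem smul_sub_smul_eps_mulVec_one_zero (ρ σ : ℝ) :
    ρ • ![1, 0] - σ • eps *ᵥ ![1, 0] = ![ρ, σ] := by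
  ext i
  fin_cases i <;> simp [eps, vecHead]

section SingleComponent

variable (α : hatS) (β : Fin 2 → ℝ) (ρ σ : ℝ) (β' : Fin 2 → ℝ) (α' : hatS)

theorem LW_alpha_snd_snd_fst (θ : hatS) :
    (LW (α, β, ρ, σ, β', α') (θ, 0, 0, 0, 0, 0)).2.2.1 = -(1 / 2 * dotM α' θ) := by
  simp [LW, dotM_eq_vec_dotProduct_vec, dotV_eq_dotProduct]

theorem LW_alphaBar_snd_snd_fst (θ : hatS) :
    (LW (α, β, ρ, σ, β', α') (0, 0, 0, 0, 0, θ)).2.2.1 = 1 / 2 * dotM α θ := by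
  simp [LW, dotM_eq_vec_dotProduct_vec, dotV_eq_dotProduct]

theorem LW_rho_one :
    LW (α, β, ρ, σ, β', α') (0, 0, 1, 0, 0, 0) = (-((6 : ℝ) • β'), (6 : ℝ) • β, 0, 0) := by
  simp [LW, dotM_eq_vec_dotProduct_vec, dotV_eq_dotProduct]

theorem LW_betaBar_fst (v : Fin 2 → ℝ) :
    (LW (α, β, ρ, σ, β', α') (0, 0, 0, 0, v, 0)).1 = (6 : ℝ) • (ρ • v - σ • eps *ᵥ v) := by
  simp only [LW, ZeroMemClass.coe_zero, zero_mulVec, mulVec_zero, zero_smul]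
  module

end SingleComponent

theorem eq_zero_of_forall_LW_eq_zero {W : VV} (h : ∀ Ψ, LW W Ψ = 0) : W = 0 := by
  obtain ⟨α, β, ρ, σ, β', α'⟩ := W
  have hα : α = 0 := by
    have hdot := LW_alphaBar_snd_snd_fst α β ρ σ β' α' α
    simpa [h, dotM_self_eq_zero] using hdot
  have hα' : α' = 0 := by
    have hdot := LW_alpha_snd_snd_fst α β ρ σ β' α' α'
    simpa [h, dotM_self_eq_zero] using hdot
  obtain ⟨hβ', hβ⟩ : β' = 0 ∧ β = 0 := by
    have hvec := LW_rho_one α β ρ σ β' α'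
    simpa [h, Prod.ext_iff, eq_comm] using hvec
  obtain ⟨hρ, hσ⟩ : ρ = 0 ∧ σ = 0 := by
    have hvec := LW_betaBar_fst α β ρ σ β' α' ![1, 0]
    rw [smul_sub_smul_eps_mulVec_one_zero] at hvec
    simpa [h, eq_comm] using hvec
  subst hα hα' hβ hβ' hρ hσ
  rfl

theorem ker_linearLW_ne_top {W : VV} (hW : W ≠ 0) : LinearMap.ker (linearLW W) ≠ ⊤ := by
  intro htop
  have hzero : linearLW W = 0 := LinearMap.ker_eq_top.mp htop
  exact hW (eq_zero_of_forall_LW_eq_zero (LinearMap.congr_fun hzero))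

/-- If `W ∈ 𝒱` is nonzero, then the kernel of the linear map
`𝔏_W : 𝒱 → ℝ² × ℝ² × ℝ × ℝ` is a proper linear subspace of `𝒱`; in particular, since
`dim_ℝ 𝒱 = 10`, the kernel of `𝔏_W` has dimension at most `9`. -/
theorem stmt_11 (W : VV) (hW : W ≠ 0) :
    Module.finrank ℝ VV = 10 ∧
    ∃ K : Submodule ℝ VV, (K : Set VV) = {Ψ : VV | LW W Ψ = 0} ∧ K ≠ ⊤ ∧
      Module.finrank ℝ ↥K ≤ 9 := by
  have hker : LinearMap.ker (linearLW W) ≠ ⊤ := ker_linearLW_ne_top hW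
  have hlt := Submodule.finrank_lt hker
  rw [finrank_VV] at hlt
  exact ⟨finrank_VV, LinearMap.ker (linearLW W), rfl, hker, Nat.le_of_lt_succ hlt⟩

end
end
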